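/- Let w be an ESG world and w_t the corresponding time-extended t-ESG world, and let δ be an ESG program expression. (1) For every finite sequence of ESG transitions ⟨z, δ⟩ → ⟨z_1, δ_1⟩ → … → ⟨z_n, δ_n⟩ in w there is a finite sequence of t-ESG transitions ⟨z_t, δ⟩ → ⟨z_{t,1}, δ_1⟩ → … → ⟨z_{t,n}, δ_n⟩ in w_t with untimed(z_{t,i}) = z_i for all i, and ⟨z_{t,n}, δ_n⟩ is final in w_t iff ⟨z_n, δ_n⟩ is final in w. (2) Conversely, for every finite sequence of t-ESG transitions ⟨z_t, δ⟩ → … → ⟨z_{t,n}, δ_n⟩ in w_t there is a finite sequence of ESG transitions ⟨z, δ⟩ → … → ⟨z_n, δ_n⟩ in w with untimed(z_{t,i}) = z_i for all i and matching finality, where z = untimed(z_t). -/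

import Mathlib

namespace TESG

/-! ### Sorts, standard names, symbols -/

inductive Sort3 : Type
  | obj | act | clk
  deriving DecidableEq

/-- A standard name: a sort together with a numeric identifier
(there are countably infinitely many standard names of each sort). -/
structure Name : Type where
  sort : Sort3
  id : ℕ
  deriving DecidableEq

/-- A function symbol (with a result sort and a fluent/rigid flag). -/
structure FuncSym : Type where
  id : ℕ
  sort : Sort3
  fluent : Bool
  deriving DecidableEq

/-- Predicate symbols: the distinguished fluents `poss`, `reset` and the
clock-constraint predicate `gc`, plus ordinary fluent (`fl`) and rigid (`rg`)
predicate symbols. -/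
inductive PredSym : Type
  | poss | reset | gc
  | fl (id : ℕ)
  | rg (id : ℕ)
  deriving DecidableEq

def PredSym.isFluent : PredSym → Bool
  | .rg _ => false
  | _ => true

inductive CmpOp : Type
  | lt | le | eq | ge | gt
  deriving DecidableEq

def CmpOp.holds : CmpOp → ℝ → ℝ → Prop
  | .lt, a, b => a < b
  | .le, a, b => a ≤ b
  | .eq, a, b => a = b
  | .ge, a, b => b ≤ a
  | .gt, a, b => b < a

/-- Open, closed or half-closed intervals with natural number endpoints
(`hi = none` means `∞`). -/
structure Ival : Type where
  lo : ℕ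
  hi : Option ℕ
  loOpen : Bool
  hiOpen : Bool
  deriving DecidableEq

def Ival.memR (I : Ival) (x : ℝ) : Prop :=
  (if I.loOpen then (I.lo : ℝ) < x else (I.lo : ℝ) ≤ x) ∧
  (match I.hi with
   | none => True
   | some h => if I.hiOpen then x < (h : ℝ) else x ≤ (h : ℝ))

def Ival.unbounded : Ival := ⟨0, none, false, false⟩

/-! ### Terms -/

mutual
  inductive Term : Type
    | name (n : Name)
    | app (f : FuncSym) (args : ArgList)
  inductive ArgList : Type
    | nil
    | cons (t : Term) (ts : ArgList)
end

def ArgList.ofNames : List Name → ArgList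
  | [] => .nil
  | n :: ns => .cons (.name n) (ArgList.ofNames ns)

/-! ### Formulas (situation formulas, trace formulas) and Golog programs.
Quantification is understood substitutionally over standard names and is
represented by binding a standard name (higher-order abstract syntax). -/

mutual
  inductive SitForm : Type
    | pred (P : PredSym) (args : ArgList)
    | eq (t₁ t₂ : Term)
    | clockCmp (c : Term) (op : CmpOp) (r : ℚ)
    | constCmp (r : ℚ) (op : CmpOp) (r' : ℚ)
    | and (α β : SitForm)
    | not (α : SitForm)
    | all (s : Sort3) (body : Name → SitForm)
    | box (α : SitForm)
    | after (δ : Prog) (α : SitForm)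
    | during (δ : Prog) (φ : TraceForm)
    | duringFin (δ : Prog) (φ : TraceForm)
  inductive TraceForm : Type
    | base (α : SitForm)
    | and (φ ψ : TraceForm)
    | not (φ : TraceForm)
    | all (s : Sort3) (body : Name → TraceForm)
    | untl (I : Ival) (φ ψ : TraceForm)
  inductive Prog : Type
    | act (t : Term)
    | test (α : SitForm)
    | seq (δ₁ δ₂ : Prog)
    | choice (δ₁ δ₂ : Prog)
    | conc (δ₁ δ₂ : Prog)
    | star (δ : Prog)
end

def SitForm.orS (α β : SitForm) : SitForm := .not (.and (.not α) (.not β))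
def SitForm.impS (α β : SitForm) : SitForm := .not (.and α (.not β))
def SitForm.iffS (α β : SitForm) : SitForm := .and (α.impS β) (β.impS α)
def trueSit : SitForm := .all .obj fun n => .eq (.name n) (.name n)
def falseSit : SitForm := .not trueSit
def nilProg : Prog := .test trueSit

/-! ### Timed traces.
A finite timed trace is a list of (time point, action standard name) pairs. -/

abbrev FinTrace := List (ℝ × ℕ)

def lastTime (z : FinTrace) : ℝ := ((z.getLast?).map Prod.fst).getD 0

def TraceWFFrom (t₀ : ℝ) (z : FinTrace) : Prop :=
  List.Chain' (· ≤ ·) (t₀ :: z.map Prod.fst)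

def TraceWF : FinTrace → Prop := TraceWFFrom 0

def untimed (z : FinTrace) : List ℕ := z.map Prod.snd

/-! ### Worlds -/

structure World : Type where
  fval : FuncSym → List Name → FinTrace → Name
  pval : PredSym → List Name → FinTrace → Bool
  cval : ℕ → FinTrace → ℝ
  fval_sort : ∀ f args z, (fval f args z).sort = f.sort
  rigid_fun : ∀ f : FuncSym, f.fluent = false → ∀ args z z', fval f args z = fval f args z'
  rigid_pred : ∀ P : PredSym, P.isFluent = false → ∀ args z z', pval P args z = pval P args z'
  unique_names : ∀ f f' args args' z z', f.sort ≠ Sort3.obj → f'.sort ≠ Sort3.obj →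
      (f, args) ≠ (f', args') → fval f args z ≠ fval f' args' z'
  clock_init : ∀ c, cval c [] = 0
  clock_prog : ∀ c z t p, TraceWF (z ++ [(t, p)]) →
      cval c (z ++ [(t, p)]) =
        (if pval PredSym.reset [Name.mk Sort3.clk c] (z ++ [(t, p)]) = true then 0
         else cval c z + (t - lastTime z))

/-! ### Denotation of ground terms -/

mutual
  def denot (w : World) (z : FinTrace) : Term → Name
    | .name n => n
    | .app f args => w.fval f (denotArgs w z args) z
  def denotArgs (w : World) (z : FinTrace) : ArgList → List Name
    | .nil => []
    | .cons t ts => denot w z t :: denotArgs w z ts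
end

/-! ### Truth of static situation formulas at a time-extended trace `z · t`
(fluent values are observed at action occurrences, i.e. at `z`; clock values
are advanced to the time point `t`). -/

def cvalAt (w : World) (z : FinTrace) (t : ℝ) (c : ℕ) : ℝ :=
  w.cval c z + (t - lastTime z)

def StaticSatT (w : World) (z : FinTrace) (t : ℝ) : SitForm → Prop
  | .pred P args => w.pval P (denotArgs w z args) z = true
  | .eq t₁ t₂ => denot w z t₁ = denot w z t₂
  | .clockCmp c op r =>
      (denot w z c).sort = Sort3.clk ∧ op.holds (cvalAt w z t (denot w z c).id) (r : ℝ)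
  | .constCmp r op r' => op.holds (r : ℝ) (r' : ℝ)
  | .and α β => StaticSatT w z t α ∧ StaticSatT w z t β
  | .not α => ¬ StaticSatT w z t α
  | .all s body => ∀ k : ℕ, StaticSatT w z t (body (Name.mk s k))
  | .box _ => False
  | .after _ _ => False
  | .during _ _ => False
  | .duringFin _ _ => False

/-! ### Program transition semantics -/

/-- Final configurations (`t` is the pending time point of the configuration). -/
inductive Final (w : World) (z : FinTrace) (t : ℝ) : Prog → Prop
  | test {α} : StaticSatT w z t α → Final w z t (.test α)
  | seq {δ₁ δ₂} : Final w z t δ₁ → Final w z t δ₂ → Final w z t (.seq δ₁ δ₂)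
  | choiceL {δ₁ δ₂} : Final w z t δ₁ → Final w z t (.choice δ₁ δ₂)
  | choiceR {δ₁ δ₂} : Final w z t δ₂ → Final w z t (.choice δ₁ δ₂)
  | star {δ} : Final w z t (.star δ)
  | conc {δ₁ δ₂} : Final w z t δ₁ → Final w z t δ₂ → Final w z t (.conc δ₁ δ₂)

/-- Action step of the transition semantics, taken at the time point `t`. -/
inductive TransA (w : World) (z : FinTrace) (t : ℝ) : Prog → FinTrace → Prog → Prop
  | act {a : Term} (h : (denot w z a).sort = Sort3.act) :
      TransA w z t (.act a) (z ++ [(t, (denot w z a).id)]) nilProg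
  | seqL {δ₁ δ₂ γ z'} : TransA w z t δ₁ z' γ → TransA w z t (.seq δ₁ δ₂) z' (.seq γ δ₂)
  | seqR {δ₁ δ₂ δ' z'} : Final w z t δ₁ → TransA w z t δ₂ z' δ' → TransA w z t (.seq δ₁ δ₂) z' δ'
  | choiceL {δ₁ δ₂ δ' z'} : TransA w z t δ₁ z' δ' → TransA w z t (.choice δ₁ δ₂) z' δ'
  | choiceR {δ₁ δ₂ δ' z'} : TransA w z t δ₂ z' δ' → TransA w z t (.choice δ₁ δ₂) z' δ'
  | star {δ γ z'} : TransA w z t δ z' γ → TransA w z t (.star δ) z' (.seq γ (.star δ))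
  | concL {δ₁ δ₂ δ' z'} : TransA w z t δ₁ z' δ' → TransA w z t (.conc δ₁ δ₂) z' (.conc δ' δ₂)
  | concR {δ₁ δ₂ δ' z'} : TransA w z t δ₂ z' δ' → TransA w z t (.conc δ₁ δ₂) z' (.conc δ₁ δ')

abbrev Config := FinTrace × Prog

/-- A transition: a time step (to some time point `t` not before the current
time) followed by an action step. -/
def Trans (w : World) (c c' : Config) : Prop :=
  ∃ t : ℝ, lastTime c.1 ≤ t ∧ TransA w c.1 t c.2 c'.1 c'.2

def FinalC (w : World) (c : Config) : Prop := Final w c.1 (lastTime c.1) c.2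

def TransStar (w : World) : Config → Config → Prop :=
  Relation.ReflTransGen (Trans w)

/-! ### Possibly infinite timed traces and program traces -/

inductive TTrace : Type
  | fin (z : FinTrace)
  | inf (π : ℕ → ℝ × ℕ)

def prefixTr (π : ℕ → ℝ × ℕ) (n : ℕ) : FinTrace := (List.range n).map π

def TTrace.len : TTrace → ℕ∞
  | .fin z => (z.length : ℕ∞)
  | .inf _ => ⊤

def TTrace.takeFin : TTrace → ℕ → FinTrace
  | .fin z, n => z.take n
  | .inf π, n => prefixTr π n

def TTrace.drop : TTrace → ℕ → TTrace
  | .fin z, n => .fin (z.drop n)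
  | .inf π, n => .inf (fun i => π (i + n))

def TTrace.WF : TTrace → Prop
  | .fin z => TraceWF z
  | .inf π => (∀ i, 0 ≤ (π i).1) ∧ ∀ i j, i ≤ j → (π i).1 ≤ (π j).1

/-- The program traces `‖δ‖ᶻ_w` of a program `δ` starting after the finite
trace `z` in world `w`: the finite traces leading to a final configuration and
the infinite traces of runs that never reach a final configuration. -/
def ProgTrace (w : World) (z : FinTrace) (δ : Prog) : TTrace → Prop
  | .fin z' => ∃ δ', TransStar w (z, δ) (z ++ z', δ') ∧ FinalC w (z ++ z', δ')
  | .inf π => ∃ ρ : ℕ → Prog, ρ 0 = δ ∧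
      (∀ i, Trans w (z ++ prefixTr π i, ρ i) (z ++ prefixTr π (i + 1), ρ (i + 1))) ∧
      (∀ i, ¬ FinalC w (z ++ prefixTr π (i + 1), ρ (i + 1)))

/-! ### Truth of formulas -/

mutual
  def SatS : World → FinTrace → SitForm → Prop
    | w, z, .pred P args => w.pval P (denotArgs w z args) z = true
    | w, z, .eq t₁ t₂ => denot w z t₁ = denot w z t₂
    | w, z, .clockCmp c op r =>
        (denot w z c).sort = Sort3.clk ∧ op.holds (w.cval (denot w z c).id z) (r : ℝ)
    | _, _, .constCmp r op r' => op.holds (r : ℝ) (r' : ℝ)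
    | w, z, .and α β => SatS w z α ∧ SatS w z β
    | w, z, .not α => ¬ SatS w z α
    | w, z, .all s body => ∀ k : ℕ, SatS w z (body (Name.mk s k))
    | w, z, .box α => ∀ z' : FinTrace, TraceWFFrom (lastTime z) z' → SatS w (z ++ z') α
    | w, z, .after δ α => ∀ z' : FinTrace, ProgTrace w z δ (.fin z') → SatS w (z ++ z') α
    | w, z, .during δ φ => ∀ τ : TTrace, ProgTrace w z δ τ → SatT w z τ φ
    | w, z, .duringFin δ φ =>
        ∀ z' : FinTrace, ProgTrace w z δ (.fin z') → SatT w z (.fin z') φ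
  def SatT : World → FinTrace → TTrace → TraceForm → Prop
    | w, z, _, .base α => SatS w z α
    | w, z, τ, .and φ ψ => SatT w z τ φ ∧ SatT w z τ ψ
    | w, z, τ, .not φ => ¬ SatT w z τ φ
    | w, z, τ, .all s body => ∀ k : ℕ, SatT w z τ (body (Name.mk s k))
    | w, z, τ, .untl I φ ψ =>
        ∃ k : ℕ, 1 ≤ k ∧ (k : ℕ∞) ≤ τ.len ∧
          SatT w (z ++ τ.takeFin k) (τ.drop k) ψ ∧
          I.memR (lastTime (z ++ τ.takeFin k) - lastTime z) ∧
          ∀ m : ℕ, 1 ≤ m → m < k → SatT w (z ++ τ.takeFin m) (τ.drop m) φ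
end

/-- `w ⊨ α` -/
def Sat0 (w : World) (α : SitForm) : Prop := SatS w [] α

/-- Validity in t-ESG. -/
def TESGValid (α : SitForm) : Prop := ∀ w : World, Sat0 w α

def SatAll (w : World) (Γ : Set SitForm) : Prop := ∀ α ∈ Γ, Sat0 w α

/-- Entailment in t-ESG. -/
def Entails (Γ : Set SitForm) (α : SitForm) : Prop :=
  ∀ w : World, SatAll w Γ → Sat0 w α
/-! ### Syntactic classes of terms and formulas -/

mutual
  /-- A term mentioning no clock terms (in particular it is of sort object or
  action, as are all of its subterms). -/
  def Term.noClk : Term → Prop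
    | .name n => n.sort ≠ Sort3.clk
    | .app f args => f.sort ≠ Sort3.clk ∧ ArgList.noClk args
  def ArgList.noClk : ArgList → Prop
    | .nil => True
    | .cons t ts => Term.noClk t ∧ ArgList.noClk ts
end

/-- Static situation formulas: no `[·]`, `⟦·⟧` or `□` operators. -/
def SitForm.IsStatic : SitForm → Prop
  | .pred _ _ => True
  | .eq _ _ => True
  | .clockCmp _ _ _ => True
  | .constCmp _ _ _ => True
  | .and α β => α.IsStatic ∧ β.IsStatic
  | .not α => α.IsStatic
  | .all _ body => ∀ n : Name, (body n).IsStatic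
  | .box _ => False
  | .after _ _ => False
  | .during _ _ => False
  | .duringFin _ _ => False

/-- Fluent situation formulas: static, time-invariant (no clock terms, no
mention of the clock-constraint predicate `gc`) and no mention of `poss`. -/
def SitForm.IsFluentF : SitForm → Prop
  | .pred P args => P ≠ PredSym.poss ∧ P ≠ PredSym.gc ∧ ArgList.noClk args
  | .eq t₁ t₂ => Term.noClk t₁ ∧ Term.noClk t₂
  | .clockCmp _ _ _ => False
  | .constCmp _ _ _ => True
  | .and α β => α.IsFluentF ∧ β.IsFluentF
  | .not α => α.IsFluentF
  | .all s body => s ≠ Sort3.clk ∧ ∀ n : Name, (body n).IsFluentF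
  | .box _ => False
  | .after _ _ => False
  | .during _ _ => False
  | .duringFin _ _ => False

/-- Static situation formulas that do not mention `poss`. -/
def SitForm.IsStaticNoPoss : SitForm → Prop
  | .pred P _ => P ≠ PredSym.poss
  | .eq _ _ => True
  | .clockCmp _ _ _ => True
  | .constCmp _ _ _ => True
  | .and α β => α.IsStaticNoPoss ∧ β.IsStaticNoPoss
  | .not α => α.IsStaticNoPoss
  | .all _ body => ∀ n : Name, (body n).IsStaticNoPoss
  | .box _ => False
  | .after _ _ => False
  | .during _ _ => False
  | .duringFin _ _ => False

/-- Time-invariant (static) situation formulas: no clock terms and no mention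
of the clock-constraint predicate `gc`. -/
def SitForm.IsTimeInvS : SitForm → Prop
  | .pred P args => P ≠ PredSym.gc ∧ ArgList.noClk args
  | .eq t₁ t₂ => Term.noClk t₁ ∧ Term.noClk t₂
  | .clockCmp _ _ _ => False
  | .constCmp _ _ _ => True
  | .and α β => α.IsTimeInvS ∧ β.IsTimeInvS
  | .not α => α.IsTimeInvS
  | .all s body => s ≠ Sort3.clk ∧ ∀ n : Name, (body n).IsTimeInvS
  | .box _ => False
  | .after _ _ => False
  | .during _ _ => False
  | .duringFin _ _ => False

/-! ### Formulas over a pair `(F, C)` of fluents and clocks -/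

mutual
  def Term.Over (Fn : Set FuncSym) (C : Set ℕ) : Term → Prop
    | .name n => n.sort = Sort3.clk → n.id ∈ C
    | .app f args => (f.fluent = true → f ∈ Fn) ∧ ArgList.Over Fn C args
  def ArgList.Over (Fn : Set FuncSym) (C : Set ℕ) : ArgList → Prop
    | .nil => True
    | .cons t ts => Term.Over Fn C t ∧ ArgList.Over Fn C ts
end

mutual
  /-- Situation formulas over `(F, C)`: mentioning only (relational) fluents
  from `R`, functional fluents from `Fn` and clocks from `C` (the distinguished
  predicates `poss`, `gc` are determined by a BAT and are allowed as well). -/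
  def OverS (R : Set PredSym) (Fn : Set FuncSym) (C : Set ℕ) : SitForm → Prop
    | .pred P args =>
        (P.isFluent = true → P = PredSym.poss ∨ P = PredSym.gc ∨ P ∈ R) ∧
        ArgList.Over Fn C args
    | .eq t₁ t₂ => Term.Over Fn C t₁ ∧ Term.Over Fn C t₂
    | .clockCmp c _ _ => Term.Over Fn C c
    | .constCmp _ _ _ => True
    | .and α β => OverS R Fn C α ∧ OverS R Fn C β
    | .not α => OverS R Fn C α
    | .all s body => ∀ k : ℕ,
        OverS R Fn (C ∪ (if s = Sort3.clk then {k} else ∅)) (body (Name.mk s k))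
    | .box α => OverS R Fn C α
    | .after δ α => OverP R Fn C δ ∧ OverS R Fn C α
    | .during δ φ => OverP R Fn C δ ∧ OverT R Fn C φ
    | .duringFin δ φ => OverP R Fn C δ ∧ OverT R Fn C φ
  def OverT (R : Set PredSym) (Fn : Set FuncSym) (C : Set ℕ) : TraceForm → Prop
    | .base α => OverS R Fn C α
    | .and φ ψ => OverT R Fn C φ ∧ OverT R Fn C ψ
    | .not φ => OverT R Fn C φ
    | .all s body => ∀ k : ℕ,
        OverT R Fn (C ∪ (if s = Sort3.clk then {k} else ∅)) (body (Name.mk s k))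
    | .untl _ φ ψ => OverT R Fn C φ ∧ OverT R Fn C ψ
  def OverP (R : Set PredSym) (Fn : Set FuncSym) (C : Set ℕ) : Prog → Prop
    | .act t => Term.Over Fn C t
    | .test α => OverS R Fn C α
    | .seq δ₁ δ₂ => OverP R Fn C δ₁ ∧ OverP R Fn C δ₂
    | .choice δ₁ δ₂ => OverP R Fn C δ₁ ∧ OverP R Fn C δ₂
    | .conc δ₁ δ₂ => OverP R Fn C δ₁ ∧ OverP R Fn C δ₂
    | .star δ => OverP R Fn C δ
end

/-! ### The ESG fragment: no clocks, no `reset`/`gc`, only unbounded until -/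

mutual
  def IsESGS : SitForm → Prop
    | .pred P args => P ≠ PredSym.reset ∧ P ≠ PredSym.gc ∧ ArgList.noClk args
    | .eq t₁ t₂ => Term.noClk t₁ ∧ Term.noClk t₂
    | .clockCmp _ _ _ => False
    | .constCmp _ _ _ => False
    | .and α β => IsESGS α ∧ IsESGS β
    | .not α => IsESGS α
    | .all s body => s ≠ Sort3.clk ∧ ∀ n : Name, IsESGS (body n)
    | .box α => IsESGS α
    | .after δ α => IsESGP δ ∧ IsESGS α
    | .during δ φ => IsESGP δ ∧ IsESGT φ
    | .duringFin δ φ => IsESGP δ ∧ IsESGT φ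
  def IsESGT : TraceForm → Prop
    | .base α => IsESGS α
    | .and φ ψ => IsESGT φ ∧ IsESGT ψ
    | .not φ => IsESGT φ
    | .all s body => s ≠ Sort3.clk ∧ ∀ n : Name, IsESGT (body n)
    | .untl I φ ψ => I = Ival.unbounded ∧ IsESGT φ ∧ IsESGT ψ
  def IsESGP : Prog → Prop
    | .act t => Term.noClk t
    | .test α => α.IsStatic ∧ IsESGS α
    | .seq δ₁ δ₂ => IsESGP δ₁ ∧ IsESGP δ₂
    | .choice δ₁ δ₂ => IsESGP δ₁ ∧ IsESGP δ₂
    | .conc δ₁ δ₂ => IsESGP δ₁ ∧ IsESGP δ₂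
    | .star δ => IsESGP δ
end
/-! ### The logic ESG: untimed traces and worlds -/

abbrev ETrace := List ℕ

structure EWorld : Type where
  fval : FuncSym → List Name → ETrace → Name
  pval : PredSym → List Name → ETrace → Bool
  fval_sort : ∀ f args z, (fval f args z).sort = f.sort
  rigid_fun : ∀ f : FuncSym, f.fluent = false → ∀ args z z', fval f args z = fval f args z'
  rigid_pred : ∀ P : PredSym, P.isFluent = false → ∀ args z z', pval P args z = pval P args z'
  unique_names : ∀ f f' args args' z z', f.sort = Sort3.act → f'.sort = Sort3.act →
      (f, args) ≠ (f', args') → fval f args z ≠ fval f' args' z'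

mutual
  def edenot (e : EWorld) (z : ETrace) : Term → Name
    | .name n => n
    | .app f args => e.fval f (edenotArgs e z args) z
  def edenotArgs (e : EWorld) (z : ETrace) : ArgList → List Name
    | .nil => []
    | .cons t ts => edenot e z t :: edenotArgs e z ts
end

def EStaticSat (e : EWorld) (z : ETrace) : SitForm → Prop
  | .pred P args => e.pval P (edenotArgs e z args) z = true
  | .eq t₁ t₂ => edenot e z t₁ = edenot e z t₂
  | .clockCmp _ _ _ => False
  | .constCmp _ _ _ => False
  | .and α β => EStaticSat e z α ∧ EStaticSat e z β
  | .not α => ¬ EStaticSat e z α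
  | .all s body => ∀ k : ℕ, EStaticSat e z (body (Name.mk s k))
  | .box _ => False
  | .after _ _ => False
  | .during _ _ => False
  | .duringFin _ _ => False

inductive EFinal (e : EWorld) (z : ETrace) : Prog → Prop
  | test {α} : EStaticSat e z α → EFinal e z (.test α)
  | seq {δ₁ δ₂} : EFinal e z δ₁ → EFinal e z δ₂ → EFinal e z (.seq δ₁ δ₂)
  | choiceL {δ₁ δ₂} : EFinal e z δ₁ → EFinal e z (.choice δ₁ δ₂)
  | choiceR {δ₁ δ₂} : EFinal e z δ₂ → EFinal e z (.choice δ₁ δ₂)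
  | star {δ} : EFinal e z (.star δ)
  | conc {δ₁ δ₂} : EFinal e z δ₁ → EFinal e z δ₂ → EFinal e z (.conc δ₁ δ₂)

inductive ETransA (e : EWorld) (z : ETrace) : Prog → ETrace → Prog → Prop
  | act {a : Term} (h : (edenot e z a).sort = Sort3.act) :
      ETransA e z (.act a) (z ++ [(edenot e z a).id]) nilProg
  | seqL {δ₁ δ₂ γ z'} : ETransA e z δ₁ z' γ → ETransA e z (.seq δ₁ δ₂) z' (.seq γ δ₂)
  | seqR {δ₁ δ₂ δ' z'} : EFinal e z δ₁ → ETransA e z δ₂ z' δ' → ETransA e z (.seq δ₁ δ₂) z' δ'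
  | choiceL {δ₁ δ₂ δ' z'} : ETransA e z δ₁ z' δ' → ETransA e z (.choice δ₁ δ₂) z' δ'
  | choiceR {δ₁ δ₂ δ' z'} : ETransA e z δ₂ z' δ' → ETransA e z (.choice δ₁ δ₂) z' δ'
  | star {δ γ z'} : ETransA e z δ z' γ → ETransA e z (.star δ) z' (.seq γ (.star δ))
  | concL {δ₁ δ₂ δ' z'} : ETransA e z δ₁ z' δ' → ETransA e z (.conc δ₁ δ₂) z' (.conc δ' δ₂)
  | concR {δ₁ δ₂ δ' z'} : ETransA e z δ₂ z' δ' → ETransA e z (.conc δ₁ δ₂) z' (.conc δ₁ δ')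

abbrev EConfig := ETrace × Prog

def ETrans (e : EWorld) (c c' : EConfig) : Prop := ETransA e c.1 c.2 c'.1 c'.2

def EFinalC (e : EWorld) (c : EConfig) : Prop := EFinal e c.1 c.2

def ETransStar (e : EWorld) : EConfig → EConfig → Prop :=
  Relation.ReflTransGen (ETrans e)

inductive ETTrace : Type
  | fin (z : ETrace)
  | inf (π : ℕ → ℕ)

def eprefixTr (π : ℕ → ℕ) (n : ℕ) : ETrace := (List.range n).map π

def ETTrace.len : ETTrace → ℕ∞
  | .fin z => (z.length : ℕ∞)
  | .inf _ => ⊤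

def ETTrace.takeFin : ETTrace → ℕ → ETrace
  | .fin z, n => z.take n
  | .inf π, n => eprefixTr π n

def ETTrace.drop : ETTrace → ℕ → ETTrace
  | .fin z, n => .fin (z.drop n)
  | .inf π, n => .inf (fun i => π (i + n))

def EProgTrace (e : EWorld) (z : ETrace) (δ : Prog) : ETTrace → Prop
  | .fin z' => ∃ δ', ETransStar e (z, δ) (z ++ z', δ') ∧ EFinalC e (z ++ z', δ')
  | .inf π => ∃ ρ : ℕ → Prog, ρ 0 = δ ∧
      (∀ i, ETrans e (z ++ eprefixTr π i, ρ i) (z ++ eprefixTr π (i + 1), ρ (i + 1))) ∧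
      (∀ i, ¬ EFinalC e (z ++ eprefixTr π (i + 1), ρ (i + 1)))

mutual
  def ESatS : EWorld → ETrace → SitForm → Prop
    | e, z, .pred P args => e.pval P (edenotArgs e z args) z = true
    | e, z, .eq t₁ t₂ => edenot e z t₁ = edenot e z t₂
    | _, _, .clockCmp _ _ _ => False
    | _, _, .constCmp _ _ _ => False
    | e, z, .and α β => ESatS e z α ∧ ESatS e z β
    | e, z, .not α => ¬ ESatS e z α
    | e, z, .all s body => ∀ k : ℕ, ESatS e z (body (Name.mk s k))
    | e, z, .box α => ∀ z' : ETrace, ESatS e (z ++ z') α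
    | e, z, .after δ α => ∀ z' : ETrace, EProgTrace e z δ (.fin z') → ESatS e (z ++ z') α
    | e, z, .during δ φ => ∀ τ : ETTrace, EProgTrace e z δ τ → ESatT e z τ φ
    | e, z, .duringFin δ φ =>
        ∀ z' : ETrace, EProgTrace e z δ (.fin z') → ESatT e z (.fin z') φ
  def ESatT : EWorld → ETrace → ETTrace → TraceForm → Prop
    | e, z, _, .base α => ESatS e z α
    | e, z, τ, .and φ ψ => ESatT e z τ φ ∧ ESatT e z τ ψ
    | e, z, τ, .not φ => ¬ ESatT e z τ φ
    | e, z, τ, .all s body => ∀ k : ℕ, ESatT e z τ (body (Name.mk s k))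
    | e, z, τ, .untl _ φ ψ =>
        ∃ k : ℕ, 1 ≤ k ∧ (k : ℕ∞) ≤ τ.len ∧
          ESatT e (z ++ τ.takeFin k) (τ.drop k) ψ ∧
          ∀ m : ℕ, 1 ≤ m → m < k → ESatT e (z ++ τ.takeFin m) (τ.drop m) φ
end

/-- `w ⊨_ESG α` -/
def ESat0 (e : EWorld) (α : SitForm) : Prop := ESatS e [] α

/-- Validity in ESG. -/
def ESGValid (α : SitForm) : Prop := ∀ e : EWorld, ESat0 e α

def ESatAll (e : EWorld) (Γ : Set SitForm) : Prop := ∀ α ∈ Γ, ESat0 e α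

/-- Entailment in ESG. -/
def EEntails (Γ : Set SitForm) (α : SitForm) : Prop :=
  ∀ e : EWorld, ESatAll e Γ → ESat0 e α

/-- The time-extended t-ESG world corresponding to an ESG world: it agrees
with the ESG world on every primitive term and primitive formula after every
timed trace, via the corresponding symbolic (untimed) trace. -/
def IsTimeExt (e : EWorld) (w : World) : Prop :=
  (∀ f args z, w.fval f args z = e.fval f args (untimed z)) ∧
  (∀ P args z, w.pval P args z = e.pval P args (untimed z))
/-! ### Basic action theories -/

/-- Universal quantification over a list of sorts (for the tuples `x⃗` in
successor state axioms). -/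
def allNamesL : List Sort3 → (List Name → SitForm) → SitForm
  | [], body => body []
  | s :: ss, body => .all s fun x => allNamesL ss fun xs => body (x :: xs)

def unaryArgs (t : Term) : ArgList := .cons t .nil

/-- A basic action theory over a finite set of fluents (`Frel` relational,
`Ffun` functional) and a finite set of clocks `C`:
* `init` is the set `Σ₀` of sentences about the initial situation,
* `pre a` is the right-hand side `π_a` of the precondition axiom
  `□ Poss(a) ≡ π_a`,
* `gcA a` is the right-hand side `g_a` of the clock-constraint axiom
  `□ g(a) ≡ g_a`,
* `ssaP P a x⃗` is the right-hand side `γ_F(x⃗)` of the successor state axiom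
  `□ [a] F(x⃗) ≡ γ_F(x⃗)` of the relational fluent `P`,
* `ssaF f a x⃗ y` is the right-hand side `γ_f(x⃗, y)` of the successor state
  axiom `□ [a] f(x⃗) = y ≡ γ_f(x⃗, y)` of the functional fluent `f`. -/
structure BAT : Type where
  Frel : Finset PredSym
  Ffun : Finset FuncSym
  C : Finset ℕ
  argSorts : PredSym → List Sort3
  argSortsF : FuncSym → List Sort3
  init : Set SitForm
  pre : Term → SitForm
  gcA : Term → SitForm
  ssaP : PredSym → Term → ArgList → SitForm
  ssaF : FuncSym → Term → ArgList → Term → SitForm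

/-- The precondition axiom `□ ∀a. Poss(a) ≡ π_a`. -/
def BAT.preAx (B : BAT) : SitForm :=
  .box (.all .act fun a =>
    SitForm.iffS (.pred .poss (unaryArgs (.name a))) (B.pre (.name a)))

/-- The clock-constraint axiom `□ ∀a. g(a) ≡ g_a`. -/
def BAT.gcAx (B : BAT) : SitForm :=
  .box (.all .act fun a =>
    SitForm.iffS (.pred .gc (unaryArgs (.name a))) (B.gcA (.name a)))

/-- The successor state axiom `□ ∀a ∀x⃗. [a] F(x⃗) ≡ γ_F(x⃗)`. -/
def BAT.ssaAxP (B : BAT) (P : PredSym) : SitForm :=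
  .box (.all .act fun a => allNamesL (B.argSorts P) fun xs =>
    SitForm.iffS (.after (.act (.name a)) (.pred P (ArgList.ofNames xs)))
      (B.ssaP P (.name a) (ArgList.ofNames xs)))

/-- The successor state axiom `□ ∀a ∀x⃗ ∀y. [a] (f(x⃗) = y) ≡ γ_f(x⃗, y)`. -/
def BAT.ssaAxF (B : BAT) (f : FuncSym) : SitForm :=
  .box (.all .act fun a => allNamesL (B.argSortsF f) fun xs =>
    .all f.sort fun y =>
      SitForm.iffS
        (.after (.act (.name a)) (.eq (.app f (ArgList.ofNames xs)) (.name y)))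
        (B.ssaF f (.name a) (ArgList.ofNames xs) (.name y)))

/-- The sentences of the basic action theory:
`Σ = Σ₀ ∪ Σ_pre ∪ Σ_g ∪ Σ_post`. -/
def BAT.axioms (B : BAT) : Set SitForm :=
  B.init ∪ {B.preAx, B.gcAx} ∪
    (B.ssaAxP '' (↑B.Frel : Set PredSym)) ∪ (B.ssaAxF '' (↑B.Ffun : Set FuncSym))

/-- Well-formedness of a basic action theory: the fluents are fluent symbols
(`Frel` contains the distinguished fluent `reset` but not `poss` or `gc`),
`Σ₀` consists of fluent sentences, `π_a` and all right-hand sides of successor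
state axioms are fluent formulas, and `g_a` (as well as `γ_reset`, which
necessarily mentions clock terms) is a static formula not mentioning `poss`. -/
def BAT.WF (B : BAT) : Prop :=
  PredSym.reset ∈ B.Frel ∧ PredSym.poss ∉ B.Frel ∧ PredSym.gc ∉ B.Frel ∧
  (∀ P ∈ B.Frel, P.isFluent = true) ∧ (∀ f ∈ B.Ffun, f.fluent = true) ∧
  (∀ α ∈ B.init, α.IsFluentF) ∧
  (∀ t, (B.pre t).IsFluentF) ∧
  (∀ t, (B.gcA t).IsStaticNoPoss) ∧
  (∀ P ∈ B.Frel, P ≠ PredSym.reset → ∀ a xs, (B.ssaP P a xs).IsFluentF) ∧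
  (∀ a xs, (B.ssaP PredSym.reset a xs).IsStaticNoPoss) ∧
  (∀ f ∈ B.Ffun, ∀ a xs y, (B.ssaF f a xs y).IsFluentF)

/-- `w_Σ`: the world that is like `w` except that it satisfies the dynamics
prescribed by the basic action theory `B`:
* it agrees with `w` on all symbols outside the fluents of `B` (after every
  trace), and on all fluents of `B` initially;
* after an action, the values of the fluents of `B` are determined by their
  successor state axioms;
* the truth of `Poss` and of the clock-constraint predicate `g` is determined
  by the precondition and clock-constraint axioms. -/
def IsWSigma (B : BAT) (w wS : World) : Prop :=
  (∀ f : FuncSym, f ∉ B.Ffun → ∀ args z, wS.fval f args z = w.fval f args z) ∧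
  (∀ P : PredSym, P ∉ B.Frel → P ≠ PredSym.poss → P ≠ PredSym.gc →
      ∀ args z, wS.pval P args z = w.pval P args z) ∧
  (∀ f ∈ B.Ffun, ∀ args : List Name, wS.fval f args [] = w.fval f args []) ∧
  (∀ f ∈ B.Ffun, ∀ (args : List Name) (z : FinTrace) (t : ℝ) (p : ℕ) (n : Name),
      (wS.fval f args (z ++ [(t, p)]) = n ↔
        SatS wS z (B.ssaF f (.name (Name.mk .act p)) (ArgList.ofNames args) (.name n)))) ∧
  (∀ P ∈ B.Frel, ∀ args : List Name, wS.pval P args [] = w.pval P args []) ∧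
  (∀ P ∈ B.Frel, ∀ (args : List Name) (z : FinTrace) (t : ℝ) (p : ℕ),
      (wS.pval P args (z ++ [(t, p)]) = true ↔
        SatS wS z (B.ssaP P (.name (Name.mk .act p)) (ArgList.ofNames args)))) ∧
  (∀ (n : Name) (z : FinTrace),
      (wS.pval .poss [n] z = true ↔ SatS wS z (B.pre (.name n)))) ∧
  (∀ (args : List Name) (z : FinTrace), args.length ≠ 1 →
      wS.pval .poss args z = w.pval .poss args z) ∧
  (∀ (n : Name) (z : FinTrace),
      (wS.pval .gc [n] z = true ↔ SatS wS z (B.gcA (.name n)))) ∧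
  (∀ (args : List Name) (z : FinTrace), args.length ≠ 1 →
      wS.pval .gc args z = w.pval .gc args z)

/-! ### Complete information -/

/-- A basic action theory with complete information: the initial theory
decides every primitive formula over `(F, C)` and determines the value of
every functional fluent of `F`. -/
def CompleteInfo (B : BAT) : Prop :=
  (∀ (P : PredSym) (args : List Name),
      (P.isFluent = true → P ∈ B.Frel) →
      (∀ n ∈ args, n.sort = Sort3.clk → n.id ∈ B.C) →
      Entails B.init (.pred P (ArgList.ofNames args)) ∨
        Entails B.init (.not (.pred P (ArgList.ofNames args)))) ∧
  (∀ f ∈ B.Ffun, ∀ args : List Name, ∃ n : Name,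
      Entails B.init (.eq (.app f (ArgList.ofNames args)) (.name n)))
/-! ### Regression -/

/-- Rational timed traces (all time points rational). -/
abbrev RatTrace := List (ℚ × ℕ)

def ratToFin (z : RatTrace) : FinTrace := z.map fun q => ((q.1 : ℝ), q.2)

def lastTimeQ (z : RatTrace) : ℚ := ((z.getLast?).map Prod.fst).getD 0

/-- Unfold the distinguished predicates `Poss` and `g` once, replacing them by
the right-hand sides of the precondition and clock-constraint axioms. -/
def unfoldPG (B : BAT) : SitForm → SitForm
  | .pred .poss (.cons t .nil) => B.pre t
  | .pred .gc (.cons t .nil) => B.gcA t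
  | .pred P args => .pred P args
  | .eq t₁ t₂ => .eq t₁ t₂
  | .clockCmp c op r => .clockCmp c op r
  | .constCmp r op r' => .constCmp r op r'
  | .and α β => .and (unfoldPG B α) (unfoldPG B β)
  | .not α => .not (unfoldPG B α)
  | .all s body => .all s fun n => unfoldPG B (body n)
  | α => α

/-- One regression step through a time increment `d`: clock comparisons
`c ⋈ r` become `c ⋈ (r - d)`. -/
def RstepT (d : ℚ) : SitForm → SitForm
  | .clockCmp c op r => .clockCmp c op (r - d)
  | .and α β => .and (RstepT d α) (RstepT d β)
  | .not α => .not (RstepT d α)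
  | .all s body => .all s fun n => RstepT d (body n)
  | α => α

/-- One regression step through an action `p`: a fluent atom is replaced by
the (instantiated) right-hand side of its successor state axiom, and a clock
comparison `c ⋈ r` becomes
`(R[Reset(c)] ∧ 0 ⋈ r) ∨ (¬ R[Reset(c)] ∧ c ⋈ r)`. -/
def RstepA (B : BAT) (p : ℕ) : SitForm → SitForm
  | .pred (.fl i) args => B.ssaP (.fl i) (.name (Name.mk .act p)) args
  | .pred .reset args => B.ssaP .reset (.name (Name.mk .act p)) args
  | .pred P args => .pred P args
  | .eq t₁ t₂ => .eq t₁ t₂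
  | .clockCmp c op r =>
      SitForm.orS
        (.and (B.ssaP .reset (.name (Name.mk .act p)) (.cons c .nil)) (.constCmp 0 op r))
        (.and (.not (B.ssaP .reset (.name (Name.mk .act p)) (.cons c .nil)))
          (.clockCmp c op r))
  | .constCmp r op r' => .constCmp r op r'
  | .and α β => .and (RstepA B p α) (RstepA B p β)
  | .not α => .not (RstepA B p α)
  | .all s body => .all s fun n => RstepA B p (body n)
  | α => α

/-- Regression over the empty trace: clock comparisons `c ⋈ r` become
`0 ⋈ r` (all clocks are initialized to `0`); everything else is unchanged. -/
def Rinit : SitForm → SitForm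
  | .clockCmp _ op r => .constCmp 0 op r
  | .and α β => .and (Rinit α) (Rinit β)
  | .not α => .not (Rinit α)
  | .all s body => .all s fun n => Rinit (body n)
  | α => α

/-- Regression through a (reversed) rational trace: each pair `(t, p)` is
regressed by first regressing through the action `p` and then through the
time increment `t - time(z)`. -/
def RcoreRev (B : BAT) : RatTrace → SitForm → SitForm
  | [], α => Rinit α
  | (t, p) :: zr, α =>
      RcoreRev B zr (RstepT (t - ((zr.head?.map Prod.fst).getD 0)) (RstepA B p α))

/-- The regression operator `R[z, α]` for a static formula `α` and a rational
trace `z`. -/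
def Regress (B : BAT) (z : RatTrace) (α : SitForm) : SitForm :=
  RcoreRev B z.reverse (unfoldPG B α)
/-! ### Finite-domain basic action theories -/

def bigOr : List SitForm → SitForm := fun l => l.foldr SitForm.orS falseSit

/-- A finite-domain BAT: a BAT together with finite domains of object, action
and clock standard names, and rigid type predicates `τ_o`, `τ_a`, `τ_c`. -/
structure FDBAT extends BAT where
  Dobj : Finset ℕ
  Dact : Finset ℕ
  Dclk : Finset ℕ
  tauO : ℕ
  tauA : ℕ
  tauC : ℕ

def FDBAT.dom (B : FDBAT) : Sort3 → Finset ℕ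
  | .obj => B.Dobj
  | .act => B.Dact
  | .clk => B.Dclk

def FDBAT.tau (B : FDBAT) : Sort3 → ℕ
  | .obj => B.tauO
  | .act => B.tauA
  | .clk => B.tauC

def tauAtom (tau : Sort3 → ℕ) (s : Sort3) (n : Name) : SitForm :=
  .pred (.rg (tau s)) (.cons (.name n) .nil)

/-- The domain closure axiom `∀x. τ(x) ≡ (x = n₁ ∨ … ∨ x = n_k)`. -/
noncomputable def FDBAT.closureAx (B : FDBAT) (s : Sort3) : SitForm :=
  .all s fun x =>
    SitForm.iffS (tauAtom B.tau s x)
      (bigOr ((B.dom s).toList.map fun k => .eq (.name x) (.name (Name.mk s k))))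

/-! Relativized formulas: every universal quantifier occurs in the form
`∀x. τ(x) ⊃ φ(x)`. -/

mutual
  inductive RelS (tau : Sort3 → ℕ) : SitForm → Prop
    | pred {P args} : RelS tau (.pred P args)
    | eq {t₁ t₂} : RelS tau (.eq t₁ t₂)
    | clockCmp {c op r} : RelS tau (.clockCmp c op r)
    | constCmp {r op r'} : RelS tau (.constCmp r op r')
    | and {α β} : RelS tau α → RelS tau β → RelS tau (.and α β)
    | not {α} : RelS tau α → RelS tau (.not α)
    | all {s body} (ψ : Name → SitForm) :
        (∀ n, body n = SitForm.impS (tauAtom tau s n) (ψ n)) →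
        (∀ n, RelS tau (ψ n)) → RelS tau (.all s body)
    | box {α} : RelS tau α → RelS tau (.box α)
    | after {δ α} : RelP tau δ → RelS tau α → RelS tau (.after δ α)
    | during {δ φ} : RelP tau δ → RelT tau φ → RelS tau (.during δ φ)
    | duringFin {δ φ} : RelP tau δ → RelT tau φ → RelS tau (.duringFin δ φ)
  inductive RelT (tau : Sort3 → ℕ) : TraceForm → Prop
    | base {α} : RelS tau α → RelT tau (.base α)
    | and {φ ψ} : RelT tau φ → RelT tau ψ → RelT tau (.and φ ψ)
    | not {φ} : RelT tau φ → RelT tau (.not φ)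
    | all {s body} (ψ : Name → TraceForm) :
        (∀ n, body n = TraceForm.not (.and (.base (tauAtom tau s n)) (.not (ψ n)))) →
        (∀ n, RelT tau (ψ n)) → RelT tau (.all s body)
    | untl {I φ ψ} : RelT tau φ → RelT tau ψ → RelT tau (.untl I φ ψ)
  inductive RelP (tau : Sort3 → ℕ) : Prog → Prop
    | act {t} : RelP tau (.act t)
    | test {α} : RelS tau α → RelP tau (.test α)
    | seq {δ₁ δ₂} : RelP tau δ₁ → RelP tau δ₂ → RelP tau (.seq δ₁ δ₂)
    | choice {δ₁ δ₂} : RelP tau δ₁ → RelP tau δ₂ → RelP tau (.choice δ₁ δ₂)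
    | conc {δ₁ δ₂} : RelP tau δ₁ → RelP tau δ₂ → RelP tau (.conc δ₁ δ₂)
    | star {δ} : RelP tau δ → RelP tau (.star δ)
end

/-- Well-formedness of a finite-domain BAT: `Σ₀` contains the three domain
closure axioms and, apart from these, every universal quantifier in `Σ` is
relativized to one of the type predicates. -/
def FDBAT.FDWF (B : FDBAT) : Prop :=
  (∀ s : Sort3, B.closureAx s ∈ B.init) ∧
  (∀ α ∈ B.init, (∀ s : Sort3, α ≠ B.closureAx s) → RelS B.tau α) ∧
  (∀ t, RelS B.tau (B.pre t)) ∧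
  (∀ t, RelS B.tau (B.gcA t)) ∧
  (∀ P a xs, RelS B.tau (B.ssaP P a xs)) ∧
  (∀ f a xs y, RelS B.tau (B.ssaF f a xs y))

/-- `w ≡_F w'`: the two worlds agree on the initial values of all fluents of
the finite-domain BAT on all arguments from the domain. -/
def EquivF (B : FDBAT) (w w' : World) : Prop :=
  (∀ P ∈ B.Frel, ∀ args : List Name,
      (∀ n ∈ args, n.id ∈ B.dom n.sort) → w.pval P args [] = w'.pval P args []) ∧
  (∀ f ∈ B.Ffun, ∀ args : List Name,
      (∀ n ∈ args, n.id ∈ B.dom n.sort) → w.fval f args [] = w'.fval f args [])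

/-! ### Metric temporal logic (MTL), pointwise semantics over timed words -/

/-- MTL formulas; atomic propositions are identified with nullary fluents. -/
inductive MTL : Type
  | atom (p : ℕ)
  | mnot (φ : MTL)
  | mand (φ ψ : MTL)
  | muntil (I : Ival) (φ ψ : MTL)

/-- The t-ESG trace formula corresponding to an MTL formula. -/
def MTL.toTrace : MTL → TraceForm
  | .atom p => .base (.pred (.fl p) .nil)
  | .mnot φ => .not φ.toTrace
  | .mand φ ψ => .and φ.toTrace ψ.toTrace
  | .muntil I φ ψ => .untl I φ.toTrace ψ.toTrace

/-- A (finite or infinite) timed word: position `i` carries a set of atomic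
propositions and a time point (`none` marks positions past the end of a
finite word). -/
abbrev TWord := ℕ → Option (Set ℕ × ℝ)

structure TWordWF (ρ : TWord) : Prop where
  init : ∃ s, ρ 0 = some (s, 0)
  closed : ∀ i, ρ (i + 1) ≠ none → ρ i ≠ none
  mono : ∀ i s t s' t', ρ i = some (s, t) → ρ (i + 1) = some (s', t') → t ≤ t'

/-- Pointwise MTL semantics: `ρ, i ⊨ φ`. -/
def MTLSat (ρ : TWord) : ℕ → MTL → Prop
  | i, .atom p => ∃ s t, ρ i = some (s, t) ∧ p ∈ s
  | i, .mnot φ => ¬ MTLSat ρ i φ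
  | i, .mand φ ψ => MTLSat ρ i φ ∧ MTLSat ρ i ψ
  | i, .muntil I φ ψ =>
      ∃ (j : ℕ) (si : Set ℕ) (ti : ℝ) (sj : Set ℕ) (tj : ℝ),
        i < j ∧ ρ i = some (si, ti) ∧ ρ j = some (sj, tj) ∧
        MTLSat ρ j ψ ∧ I.memR (tj - ti) ∧
        ∀ m, i < m → m < j → MTLSat ρ m φ

/-- Validity in MTL (pointwise semantics over timed words). -/
def MTLValid (φ : MTL) : Prop := ∀ ρ : TWord, TWordWF ρ → MTLSat ρ 0 φ

/-- The timed word corresponding to a pair `(w, τ)` of a t-ESG world and a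
timed trace: position `i` carries the set of (nullary) primitive formulas true
in `w` after the prefix of `τ` of length `i`, together with its time point. -/
def wordOf (w : World) (τ : TTrace) : TWord := fun i =>
  match τ with
  | .fin z =>
      if i ≤ z.length then
        some ({p : ℕ | w.pval (.fl p) [] (z.take i) = true}, lastTime (z.take i))
      else none
  | .inf π =>
      some ({p : ℕ | w.pval (.fl p) [] (prefixTr π i) = true}, lastTime (prefixTr π i))

/-! A static formula without numeric comparisons cannot observe time: its truth value after a timed
trace is its truth value after the underlying untimed trace. The two transition relations have the
same structural rules, so on programs all of whose tests are such formulas, forgetting time points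
turns timed steps into untimed ones, and an untimed step lifts to a timed step in which no time
passes. Transitions do not leave this class of programs, since the only test they introduce is the
one in `nilProg`; this lets the correspondence of single steps be iterated along a run. -/

theorem forall_le_of_forall_lt_imp_succ {P : ℕ → Prop} {n : ℕ} (zero : P 0)
    (succ : ∀ i < n, P i → P (i + 1)) : ∀ i ≤ n, P i
  | 0, _ => zero
  | i + 1, hi => succ i hi (forall_le_of_forall_lt_imp_succ zero succ i (Nat.le_of_succ_le hi))

theorem exists_seq_of_forall_lt_exists_succ {β : Type*} {P : ℕ → β → Prop}
    {S : ℕ → β → β → Prop} {n : ℕ} {b : β} (zero : P 0 b)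
    (succ : ∀ i < n, ∀ x, P i x → ∃ y, P (i + 1) y ∧ S i x y) :
    ∃ u : ℕ → β, u 0 = b ∧ (∀ i ≤ n, P i (u i)) ∧ ∀ i < n, S i (u i) (u (i + 1)) := by
  have total : ∀ i x, ∃ y, i < n → P i x → P (i + 1) y ∧ S i x y := by
    intro i x
    by_cases h : i < n ∧ P i x
    · obtain ⟨y, hy⟩ := succ i h.1 x h.2
      exact ⟨y, fun _ _ => hy⟩
    · exact ⟨x, fun hi hx => absurd ⟨hi, hx⟩ h⟩
  choose next hnext using total
  let u : ℕ → β := Nat.rec b next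
  have hP : ∀ i ≤ n, P i (u i) :=
    forall_le_of_forall_lt_imp_succ zero fun i hi hu => (hnext i (u i) hi hu).1
  exact ⟨u, rfl, hP, fun i hi => (hnext i (u i) hi (hP i hi.le)).2⟩

/-- Static situation formulas without numeric comparisons. Unlike in the ESG fragment, clock names
and the predicates `reset` and `gc` may occur: their values do not depend on the pending time
point. -/
def SitForm.IsStaticNoCmp : SitForm → Prop
  | .pred _ _ => True
  | .eq _ _ => True
  | .clockCmp _ _ _ => False
  | .constCmp _ _ _ => False
  | .and α β => α.IsStaticNoCmp ∧ β.IsStaticNoCmp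
  | .not α => α.IsStaticNoCmp
  | .all _ body => ∀ n : Name, (body n).IsStaticNoCmp
  | .box _ => False
  | .after _ _ => False
  | .during _ _ => False
  | .duringFin _ _ => False

/-- Every test formula occurring in the program satisfies `p`; nothing is required of its action
terms, and programs nested inside a test formula are left to `p`. -/
def Prog.AllTests (p : SitForm → Prop) : Prog → Prop
  | .act _ => True
  | .test α => p α
  | .seq δ₁ δ₂ => δ₁.AllTests p ∧ δ₂.AllTests p
  | .choice δ₁ δ₂ => δ₁.AllTests p ∧ δ₂.AllTests p
  | .conc δ₁ δ₂ => δ₁.AllTests p ∧ δ₂.AllTests p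
  | .star δ => δ.AllTests p

theorem isStaticNoCmp_trueSit : trueSit.IsStaticNoCmp := fun _ => trivial

theorem IsESGS.isStaticNoCmp : ∀ {α : SitForm}, IsESGS α → α.IsStatic → α.IsStaticNoCmp
  | .pred _ _, _, _ => trivial
  | .eq _ _, _, _ => trivial
  | .and _ _, h, hs => ⟨isStaticNoCmp h.1 hs.1, isStaticNoCmp h.2 hs.2⟩
  | .not α, h, hs => isStaticNoCmp (α := α) h hs
  | .all _ _, h, hs => fun n => isStaticNoCmp (h.2 n) (hs n)

theorem IsESGP.allTests_isStaticNoCmp :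
    ∀ {δ : Prog}, IsESGP δ → δ.AllTests SitForm.IsStaticNoCmp
  | .act _, _ => trivial
  | .test _, h => h.2.isStaticNoCmp h.1
  | .seq _ _, h => ⟨allTests_isStaticNoCmp h.1, allTests_isStaticNoCmp h.2⟩
  | .choice _ _, h => ⟨allTests_isStaticNoCmp h.1, allTests_isStaticNoCmp h.2⟩
  | .conc _ _, h => ⟨allTests_isStaticNoCmp h.1, allTests_isStaticNoCmp h.2⟩
  | .star δ, h => allTests_isStaticNoCmp (δ := δ) h

theorem ETransA.allTests {p : SitForm → Prop} (hp : p trueSit) {e : EWorld} {z z' : ETrace}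
    {δ δ' : Prog} (h : ETransA e z δ z' δ') (hδ : δ.AllTests p) : δ'.AllTests p := by
  induction h with
  | act => exact hp
  | seqL _ ih => exact ⟨ih hδ.1, hδ.2⟩
  | seqR _ _ ih => exact ih hδ.2
  | choiceL _ ih => exact ih hδ.1
  | choiceR _ ih => exact ih hδ.2
  | star _ ih => exact ⟨ih hδ, hδ⟩
  | concL _ ih => exact ⟨ih hδ.1, hδ.2⟩
  | concR _ ih => exact ⟨hδ.1, ih hδ.2⟩

theorem untimed_concat (z : FinTrace) (t : ℝ) (a : ℕ) :
    untimed (z ++ [(t, a)]) = untimed z ++ [a] :=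
  List.map_append

namespace IsTimeExt

variable {e : EWorld} {w : World} {z : FinTrace} {t : ℝ} {δ δ' : Prog}

mutual
  theorem denot_eq (hext : IsTimeExt e w) (z : FinTrace) :
      ∀ a : Term, denot w z a = edenot e (untimed z) a
    | .name _ => rfl
    | .app f args => by rw [denot, edenot, denotArgs_eq hext z args, hext.1]
  theorem denotArgs_eq (hext : IsTimeExt e w) (z : FinTrace) :
      ∀ as : ArgList, denotArgs w z as = edenotArgs e (untimed z) as
    | .nil => rfl
    | .cons a as => by rw [denotArgs, edenotArgs, denot_eq hext z a, denotArgs_eq hext z as]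
end

theorem staticSatT_iff (hext : IsTimeExt e w) (z : FinTrace) (t : ℝ) :
    ∀ {α : SitForm}, α.IsStaticNoCmp → (StaticSatT w z t α ↔ EStaticSat e (untimed z) α)
  | .pred P args, _ => by rw [StaticSatT, EStaticSat, hext.denotArgs_eq, hext.2]
  | .eq a b, _ => by rw [StaticSatT, EStaticSat, hext.denot_eq, hext.denot_eq]
  | .and _ _, h => and_congr (staticSatT_iff hext z t h.1) (staticSatT_iff hext z t h.2)
  | .not α, h => not_congr (staticSatT_iff (α := α) hext z t h)
  | .all s _, h => forall_congr' fun k => staticSatT_iff hext z t (h (Name.mk s k))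

theorem efinal_of_final (hext : IsTimeExt e w) (hδ : δ.AllTests SitForm.IsStaticNoCmp)
    (h : Final w z t δ) : EFinal e (untimed z) δ := by
  induction h with
  | test hα => exact .test ((hext.staticSatT_iff z t hδ).1 hα)
  | seq _ _ ih₁ ih₂ => exact .seq (ih₁ hδ.1) (ih₂ hδ.2)
  | choiceL _ ih => exact .choiceL (ih hδ.1)
  | choiceR _ ih => exact .choiceR (ih hδ.2)
  | star => exact .star
  | conc _ _ ih₁ ih₂ => exact .conc (ih₁ hδ.1) (ih₂ hδ.2)

theorem final_of_efinal (hext : IsTimeExt e w) (hδ : δ.AllTests SitForm.IsStaticNoCmp)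
    (h : EFinal e (untimed z) δ) : Final w z t δ := by
  induction h with
  | test hα => exact .test ((hext.staticSatT_iff z t hδ).2 hα)
  | seq _ _ ih₁ ih₂ => exact .seq (ih₁ hδ.1) (ih₂ hδ.2)
  | choiceL _ ih => exact .choiceL (ih hδ.1)
  | choiceR _ ih => exact .choiceR (ih hδ.2)
  | star => exact .star
  | conc _ _ ih₁ ih₂ => exact .conc (ih₁ hδ.1) (ih₂ hδ.2)

theorem finalC_iff (hext : IsTimeExt e w) (hδ : δ.AllTests SitForm.IsStaticNoCmp) :
    FinalC w (z, δ) ↔ EFinalC e (untimed z, δ) :=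
  ⟨hext.efinal_of_final hδ, hext.final_of_efinal hδ⟩

theorem etransA_of_transA (hext : IsTimeExt e w) (hδ : δ.AllTests SitForm.IsStaticNoCmp)
    {z' : FinTrace} (h : TransA w z t δ z' δ') :
    ETransA e (untimed z) δ (untimed z') δ' := by
  induction h with
  | act ha =>
    rw [hext.denot_eq] at ha ⊢
    rw [untimed_concat]
    exact .act ha
  | seqL _ ih => exact .seqL (ih hδ.1)
  | seqR hf _ ih => exact .seqR (hext.efinal_of_final hδ.1 hf) (ih hδ.2)
  | choiceL _ ih => exact .choiceL (ih hδ.1)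
  | choiceR _ ih => exact .choiceR (ih hδ.2)
  | star _ ih => exact .star (ih hδ)
  | concL _ ih => exact .concL (ih hδ.1)
  | concR _ ih => exact .concR (ih hδ.2)

theorem exists_transA_of_etransA (hext : IsTimeExt e w) (t : ℝ)
    (hδ : δ.AllTests SitForm.IsStaticNoCmp) {y : ETrace} (h : ETransA e (untimed z) δ y δ') :
    ∃ z', untimed z' = y ∧ TransA w z t δ z' δ' := by
  induction h with
  | @act a ha =>
    rw [← hext.denot_eq] at ha ⊢
    exact ⟨z ++ [(t, (denot w z a).id)], untimed_concat .., .act ha⟩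
  | seqL _ ih => exact (ih hδ.1).imp fun _ => And.imp_right .seqL
  | seqR hf _ ih =>
    exact (ih hδ.2).imp fun _ => And.imp_right (.seqR (hext.final_of_efinal hδ.1 hf))
  | choiceL _ ih => exact (ih hδ.1).imp fun _ => And.imp_right .choiceL
  | choiceR _ ih => exact (ih hδ.2).imp fun _ => And.imp_right .choiceR
  | star _ ih => exact (ih hδ).imp fun _ => And.imp_right .star
  | concL _ ih => exact (ih hδ.1).imp fun _ => And.imp_right .concL
  | concR _ ih => exact (ih hδ.2).imp fun _ => And.imp_right .concR

theorem etrans_of_trans (hext : IsTimeExt e w) (hδ : δ.AllTests SitForm.IsStaticNoCmp)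
    {z' : FinTrace} : Trans w (z, δ) (z', δ') → ETrans e (untimed z, δ) (untimed z', δ')
  | ⟨_, _, h⟩ => hext.etransA_of_transA hδ h

theorem exists_trans_of_etrans (hext : IsTimeExt e w) (hδ : δ.AllTests SitForm.IsStaticNoCmp)
    {y : ETrace} (h : ETrans e (untimed z, δ) (y, δ')) :
    ∃ z', untimed z' = y ∧ Trans w (z, δ) (z', δ') :=
  (hext.exists_transA_of_etransA (lastTime z) hδ h).imp fun _ =>
    And.imp_right fun h => ⟨lastTime z, le_rfl, h⟩

end IsTimeExt

theorem esg_tesg_same_transitions_general (e : EWorld) (wt : World) (hext : IsTimeExt e wt)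
    (δ : Prog) (hδ : δ.AllTests SitForm.IsStaticNoCmp) (zt : FinTrace) :
    (∀ (n : ℕ) (zi : ℕ → ETrace) (δi : ℕ → Prog),
        zi 0 = untimed zt → δi 0 = δ →
        (∀ i < n, ETrans e (zi i, δi i) (zi (i + 1), δi (i + 1))) →
        ∃ zti : ℕ → FinTrace,
          zti 0 = zt ∧
          (∀ i ≤ n, untimed (zti i) = zi i) ∧
          (∀ i < n, Trans wt (zti i, δi i) (zti (i + 1), δi (i + 1))) ∧
          (FinalC wt (zti n, δi n) ↔ EFinalC e (zi n, δi n)))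
    ∧
    (∀ (n : ℕ) (zti : ℕ → FinTrace) (δi : ℕ → Prog),
        zti 0 = zt → δi 0 = δ →
        (∀ i < n, Trans wt (zti i, δi i) (zti (i + 1), δi (i + 1))) →
        ∃ zi : ℕ → ETrace,
          zi 0 = untimed zt ∧
          (∀ i ≤ n, zi i = untimed (zti i)) ∧
          (∀ i < n, ETrans e (zi i, δi i) (zi (i + 1), δi (i + 1))) ∧
          (EFinalC e (zi n, δi n) ↔ FinalC wt (zti n, δi n))) := by
  constructor
  · rintro n zi δi hz₀ rfl hrun
    have hδi : ∀ i ≤ n, (δi i).AllTests SitForm.IsStaticNoCmp :=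
      forall_le_of_forall_lt_imp_succ hδ fun i hi =>
        ETransA.allTests isStaticNoCmp_trueSit (hrun i hi)
    obtain ⟨zti, hzt₀, hzti, hrun_t⟩ := exists_seq_of_forall_lt_exists_succ
      (P := fun i z => untimed z = zi i)
      (S := fun i z z' => Trans wt (z, δi i) (z', δi (i + 1))) hz₀.symm
      fun i hi _ hz => hext.exists_trans_of_etrans (hδi i hi.le) (hz ▸ hrun i hi)
    exact ⟨zti, hzt₀, hzti, hrun_t, hzti n le_rfl ▸ hext.finalC_iff (hδi n le_rfl)⟩
  · rintro n zti δi rfl rfl hrun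
    have hδi : ∀ i ≤ n, (δi i).AllTests SitForm.IsStaticNoCmp :=
      forall_le_of_forall_lt_imp_succ hδ fun i hi hδi =>
        ETransA.allTests isStaticNoCmp_trueSit (hext.etrans_of_trans hδi (hrun i hi)) hδi
    exact ⟨fun i => untimed (zti i), rfl, fun _ _ => rfl,
      fun i hi => hext.etrans_of_trans (hδi i hi.le) (hrun i hi),
      (hext.finalC_iff (hδi n le_rfl)).symm⟩

/-- Let `w` be an ESG world and `w_t` the corresponding
time-extended t-ESG world, and let `δ` be an ESG program expression.
(1) Every finite sequence of ESG transitions starting in `⟨z, δ⟩` (with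
`z = untimed(z_t)`) can be matched by a finite sequence of t-ESG transitions
starting in `⟨z_t, δ⟩` through the same programs, with `untimed(z_{t,i}) = z_i`
for all `i`, and such that the last configuration is final in `w_t` iff the
last ESG configuration is final in `w`.
(2) Conversely for finite sequences of t-ESG transitions. -/
theorem esg_tesg_same_transitions (e : EWorld) (wt : World)
    (hext : IsTimeExt e wt)
    (δ : Prog) (hδ : IsESGP δ) (zt : FinTrace) (hzt : TraceWF zt) :
    (∀ (n : ℕ) (zi : ℕ → ETrace) (δi : ℕ → Prog),
        zi 0 = untimed zt → δi 0 = δ →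
        (∀ i < n, ETrans e (zi i, δi i) (zi (i + 1), δi (i + 1))) →
        ∃ zti : ℕ → FinTrace,
          zti 0 = zt ∧
          (∀ i ≤ n, untimed (zti i) = zi i) ∧
          (∀ i < n, Trans wt (zti i, δi i) (zti (i + 1), δi (i + 1))) ∧
          (FinalC wt (zti n, δi n) ↔ EFinalC e (zi n, δi n)))
    ∧
    (∀ (n : ℕ) (zti : ℕ → FinTrace) (δi : ℕ → Prog),
        zti 0 = zt → δi 0 = δ →
        (∀ i < n, Trans wt (zti i, δi i) (zti (i + 1), δi (i + 1))) →
        ∃ zi : ℕ → ETrace,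
          zi 0 = untimed zt ∧
          (∀ i ≤ n, zi i = untimed (zti i)) ∧
          (∀ i < n, ETrans e (zi i, δi i) (zi (i + 1), δi (i + 1))) ∧
          (EFinalC e (zi n, δi n) ↔ FinalC wt (zti n, δi n))) :=
  esg_tesg_same_transitions_general e wt hext δ hδ.allTests_isStaticNoCmp zt

end TESG
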